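/- Suppose a is contained in the Jacobson radical of R and M is an a-relative generalized Cohen-Macaulay R-module such that c := cd(a,M) = ara(a,M). If x_1,...,x_c is an a-relative system of parameters of M, then for every i = 0,...,c the quotient M/⟨x_1,...,x_i⟩M is an a-relative generalized Cohen-Macaulay R-module and cd(a, M/⟨x_1,...,x_i⟩M) = c - i. -/

import Mathlib

/-!
Formalization of a statement from "A theory of relative generalized Cohen-Macaulay modules"
by Divaani-Aazar, Ghanbari Doust, Tousi and Zakeri.

Throughout, `R` is a commutative Noetherian ring and `M` a finitely generated `R`-module.
Conventions used below:
* `locH I i M` is the local cohomology module `H^i_I(M)` (Mathlib's `localCohomology`).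
* Conditions `cd(I,M) = c`, `ara(I,M) = n`, `f_I(M) = f`, `grade(I,M) = r` are expressed by
  the predicates `IsCd`, `IsAra`, `IsFinDim`, `IsGrade`.
* Sequences are given as functions `Fin r → R`; `pSpan M x i = ⟨x_0,…,x_{i-1}⟩M`.
* Koszul (co)homology is defined via the explicit (co)chain complex on the `p`-element
  subsets of `{0,…,n-1}`, and the canonical map `λ^i` into local cohomology is the structure
  map (at exponent 1) into the direct limit of Koszul cohomologies of powers of the sequence,
  which is the realization of `H^i_{⟨x⟩}(M)` used in the paper (2.1(iv)).
-/

open CategoryTheory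

noncomputable section

variable {R : Type} [CommRing R]

/-! ### Sequences: prefix spans, weak sequences, filter regular sequences, d-sequences -/

/-- `pSpan M x i` is the submodule `⟨x_0, …, x_{i-1}⟩M` of `M`. -/
def pSpan (M : Type) [AddCommGroup M] [Module R M] {r : ℕ} (x : Fin r → R) (i : Fin r) :
    Submodule R M :=
  Ideal.span (x '' {j | j < i}) • (⊤ : Submodule R M)

/-- `x_1, …, x_r` is an `I`-weak sequence on `M`:
`(⟨x_1,…,x_{i-1}⟩M :_M x_i) ⊆ (⟨x_1,…,x_{i-1}⟩M :_M I)` for all `i`. -/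
def IsWeakSeq (I : Ideal R) (M : Type) [AddCommGroup M] [Module R M] {r : ℕ}
    (x : Fin r → R) : Prop :=
  ∀ i : Fin r, ∀ m : M, x i • m ∈ pSpan M x i → ∀ a ∈ I, a • m ∈ pSpan M x i

/-- `x_1, …, x_r` is an `I`-filter regular sequence on `M`:
`(⟨x_1,…,x_{i-1}⟩M :_M x_i) ⊆ ⋃ₜ (⟨x_1,…,x_{i-1}⟩M :_M I^t)` for all `i`. -/
def IsFilterRegSeq (I : Ideal R) (M : Type) [AddCommGroup M] [Module R M] {r : ℕ}
    (x : Fin r → R) : Prop :=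
  ∀ i : Fin r, ∀ m : M, x i • m ∈ pSpan M x i →
    ∃ t : ℕ, ∀ a ∈ I ^ t, a • m ∈ pSpan M x i

/-- An unconditioned `I`-filter regular sequence: filter regular in any order. -/
def IsUncondFilterRegSeq (I : Ideal R) (M : Type) [AddCommGroup M] [Module R M] {r : ℕ}
    (x : Fin r → R) : Prop :=
  ∀ σ : Equiv.Perm (Fin r), IsFilterRegSeq I M (x ∘ σ)

/-- An unconditioned `I`-weak sequence: all positive powers, in any order, form an
`I`-weak sequence. -/
def IsUncondWeakSeq (I : Ideal R) (M : Type) [AddCommGroup M] [Module R M] {r : ℕ}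
    (x : Fin r → R) : Prop :=
  ∀ σ : Equiv.Perm (Fin r), ∀ α : Fin r → ℕ, (∀ k, 0 < α k) →
    IsWeakSeq I M fun k => x (σ k) ^ α k

/-- `x_1, …, x_r` is a d-sequence on `M`:
`(⟨x_1,…,x_{i-1}⟩M :_M x_i x_j) = (⟨x_1,…,x_{i-1}⟩M :_M x_j)` for all `i ≤ j`. -/
def IsDSeq (M : Type) [AddCommGroup M] [Module R M] {r : ℕ} (x : Fin r → R) : Prop :=
  ∀ i j : Fin r, i ≤ j → ∀ m : M,
    ((x i * x j) • m ∈ pSpan M x i ↔ x j • m ∈ pSpan M x i)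

/-- An u.s.d-sequence on `M`: all positive powers, in any order, form a d-sequence. -/
def IsUSDSeq (M : Type) [AddCommGroup M] [Module R M] {r : ℕ} (x : Fin r → R) : Prop :=
  ∀ σ : Equiv.Perm (Fin r), ∀ α : Fin r → ℕ, (∀ k, 0 < α k) →
    IsDSeq M fun k => x (σ k) ^ α k

/-! ### Local cohomology, cohomological dimension, arithmetic rank -/

/-- The `i`-th local cohomology module `H^i_I(M)`. -/
abbrev locH (I : Ideal R) (i : ℕ) (M : Type) [AddCommGroup M] [Module R M] : ModuleCat R :=
  (localCohomology I i).obj (ModuleCat.of R M)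

/-- `cd(I, M) = c`: the cohomological dimension of `I` on `M` equals `c`, i.e.
`H^c_I(M) ≠ 0` and `H^i_I(M) = 0` for all `i > c`. -/
def IsCd (I : Ideal R) (M : Type) [AddCommGroup M] [Module R M] (c : ℕ) : Prop :=
  Nontrivial (locH I c M) ∧ ∀ i : ℕ, c < i → Subsingleton (locH I i M)

/-- `f_I(M) = f`: the `I`-finiteness dimension of `M` equals `f`, i.e. `f` is the least
integer such that `H^f_I(M)` is not finitely generated. -/
def IsFinDim (I : Ideal R) (M : Type) [AddCommGroup M] [Module R M] (f : ℕ) : Prop :=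
  (∀ i : ℕ, i < f → Module.Finite R (locH I i M)) ∧ ¬ Module.Finite R (locH I f M)

/-- `M` is `I`-relative generalized Cohen-Macaulay: `cd(I,M) ≤ 0` or `cd(I,M) = f_I(M)`. -/
def IsRelGCM (I : Ideal R) (M : Type) [AddCommGroup M] [Module R M] : Prop :=
  (∀ i : ℕ, 0 < i → Subsingleton (locH I i M)) ∨
    ∃ c : ℕ, IsCd I M c ∧ IsFinDim I M c

/-- `ara(I, M) = n`: the arithmetic rank of `I` with respect to `M` equals `n`, i.e. `n` is the
least integer such that there are `x_1, …, x_n ∈ R` with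
`Rad(⟨x_1,…,x_n⟩ + Ann M) = Rad(I + Ann M)`. -/
def IsAra (I : Ideal R) (M : Type) [AddCommGroup M] [Module R M] (n : ℕ) : Prop :=
  IsLeast {k : ℕ | ∃ x : Fin k → R,
    (Ideal.span (Set.range x) + Module.annihilator R M).radical
      = (I + Module.annihilator R M).radical} n

/-- `x_1, …, x_c` is an `I`-relative system of parameters of `M` (where `c = cd(I,M)`):
the `x_i` lie in `I` and `Rad(⟨x_1,…,x_c⟩ + Ann M) = Rad(I + Ann M)`. -/
def IsRsop (I : Ideal R) (M : Type) [AddCommGroup M] [Module R M] {c : ℕ}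
    (x : Fin c → R) : Prop :=
  (∀ j, x j ∈ I) ∧
    (Ideal.span (Set.range x) + Module.annihilator R M).radical
      = (I + Module.annihilator R M).radical

/-!
For a parameter `y` the module `M/yM` is compared with `M` through the exact sequences
`0 → (0 :_M y) → M → yM → 0` and `0 → yM → M → M/yM → 0`. If `(0 :_M y)` is `I`-power torsion, it
has no higher local cohomology. Then `H^j_I(M/yM)` is finitely generated whenever `H^j_I(M)` and
`H^{j+1}_I(M)` are, and `H^{c-1}_I(M/yM) = 0` would make `y` act injectively on the `I`-power
torsion module `H^c_I(M)`, which is nonzero. An induction on the number of parameters gives the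
vanishing above that number, and Nakayama's lemma shows that the top local cohomology module is not
finitely generated.

The point is therefore that `(0 :_M x)` is `I`-power torsion for a parameter `x`. Let `J` kill
`H^j_I(M)` for all `j < c`. Modulo `Γ_I(M)`, prime avoidance replaces a second parameter by a
regular element `y`. As `J ^ 2` kills `H^j_I(M/yⁿM)` for `j < c - 1`, induction on `c` provides a
power of `J`, independent of `n`, that kills `(0 :_{M/yⁿM} x)`. By Krull's intersection theorem it
kills `(0 :_M x)`.

Local cohomology is a colimit of left derived functors of `Hom(-, M)`. Its long exact sequence is
obtained by comparing them with `Ext` of the derived category.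
-/

/-! ### The two definitions of `Ext` -/

section ExtComparison

open Opposite

universe w v u

variable (k : Type*) [CommRing k] {C : Type u} [Category.{v} C] [Abelian C] [Linear k C]

/-- The opposite of the cochain complex `Hom(K, Y)`, in the form in which it computes the left
derived functors of `(linearYoneda k C).obj Y`. -/
abbrev opHomComplex (K : ChainComplex C ℕ) (Y : C) : ChainComplex (ModuleCat.{v} k)ᵒᵖ ℕ :=
  (((linearYoneda k C).obj Y).rightOp.mapHomologicalComplex _).obj K

/-- The module of `n`-cocycles of the complex `Hom(K, Y)`. -/
def homCocycles (K : ChainComplex C ℕ) (Y : C) (n : ℕ) : Submodule k (K.X n ⟶ Y) :=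
  LinearMap.ker (Linear.leftComp k Y (K.d (n + 1) n))

section

variable (K : ChainComplex C ℕ) (Y : C) (n : ℕ)

lemma d_comp_homCocycle (f : homCocycles k K Y n) : K.d (n + 1) n ≫ f.1 = 0 := f.2

lemma opHomComplex_d_comp_op_subtype :
    (opHomComplex k K Y).d (n + 1) n ≫ (ModuleCat.ofHom (homCocycles k K Y n).subtype).op = 0 :=
  Quiver.Hom.unop_inj (by ext f; exact f.2)

/-- The comparison map from the cocycles of `Hom(K, Y)` to the dual of the opcycles of
`opHomComplex k K Y`. -/
def cocyclesToOpcycles :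
    ModuleCat.of k (homCocycles k K Y n) ⟶ ((opHomComplex k K Y).opcycles n).unop :=
  ((opHomComplex k K Y).descOpcycles _ (n + 1) (by simp)
    (opHomComplex_d_comp_op_subtype k K Y n)).unop

lemma unop_pOpcycles_cocyclesToOpcycles (f : homCocycles k K Y n) :
    ((opHomComplex k K Y).pOpcycles n).unop (cocyclesToOpcycles k K Y n f) = f.1 :=
  congr($((opHomComplex k K Y).p_descOpcycles _ (n + 1) (by simp)
    (opHomComplex_d_comp_op_subtype k K Y n)).unop f)

lemma unop_pOpcycles_injective :
    Function.Injective ((opHomComplex k K Y).pOpcycles n).unop :=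
  (ModuleCat.mono_iff_injective _).1 inferInstance

lemma cocyclesToOpcycles_surjective : Function.Surjective (cocyclesToOpcycles k K Y n) :=
  fun z ↦ ⟨⟨((opHomComplex k K Y).pOpcycles n).unop z,
    congr($((opHomComplex k K Y).d_pOpcycles (n + 1) n).unop z)⟩,
    unop_pOpcycles_injective k K Y n (unop_pOpcycles_cocyclesToOpcycles k K Y n _)⟩

/-- The map sending a cocycle of `Hom(K, Y)` to its cohomology class. -/
def cocyclesToHomology :
    ModuleCat.of k (homCocycles k K Y n) ⟶ ((opHomComplex k K Y).homology n).unop :=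
  cocyclesToOpcycles k K Y n ≫ ((opHomComplex k K Y).homologyι n).unop

lemma cocyclesToHomology_surjective : Function.Surjective (cocyclesToHomology k K Y n) :=
  ((ModuleCat.epi_iff_surjective ((opHomComplex k K Y).homologyι n).unop).1 inferInstance).comp
    (cocyclesToOpcycles_surjective k K Y n)

lemma cocyclesToHomology_eq_zero_iff_mem_range (f : homCocycles k K Y n) :
    cocyclesToHomology k K Y n f = 0 ↔
      cocyclesToOpcycles k K Y n f ∈ LinearMap.range
        ((opHomComplex k K Y).fromOpcycles n ((ComplexShape.down ℕ).next n)).unop.hom := by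
  have exact : (ShortComplex.mk ((opHomComplex k K Y).homologyι n)
      ((opHomComplex k K Y).fromOpcycles n _) (by simp)).Exact :=
    ShortComplex.exact_of_f_is_kernel _ ((opHomComplex k K Y).homologyIsKernel n _ rfl)
  exact SetLike.ext_iff.1 exact.unop.moduleCat_range_eq_ker.symm (cocyclesToOpcycles k K Y n f)

lemma cocyclesToHomology_zero_eq_zero_iff (f : homCocycles k K Y 0) :
    cocyclesToHomology k K Y 0 f = 0 ↔ f = 0 := by
  have injective : Function.Injective (cocyclesToOpcycles k K Y 0) := fun f g h ↦ Subtype.ext <| by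
    rw [← unop_pOpcycles_cocyclesToOpcycles, h, unop_pOpcycles_cocyclesToOpcycles]
  rw [cocyclesToHomology_eq_zero_iff_mem_range,
    (opHomComplex k K Y).fromOpcycles_eq_zero (by simp)]
  simp [map_eq_zero_iff _ injective]

lemma cocyclesToHomology_succ_eq_zero_iff (f : homCocycles k K Y (n + 1)) :
    cocyclesToHomology k K Y (n + 1) f = 0 ↔ ∃ g : K.X n ⟶ Y, K.d (n + 1) n ≫ g = f := by
  have coboundary (g : K.X n ⟶ Y) : ((opHomComplex k K Y).pOpcycles (n + 1)).unop
      (((opHomComplex k K Y).fromOpcycles (n + 1) n).unop g) = K.d (n + 1) n ≫ g :=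
    congr($((opHomComplex k K Y).p_fromOpcycles (n + 1) n).unop g)
  rw [cocyclesToHomology_eq_zero_iff_mem_range, ChainComplex.next_nat_succ]
  refine exists_congr fun g ↦ ?_
  rw [← (unop_pOpcycles_injective k K Y (n + 1)).eq_iff, unop_pOpcycles_cocyclesToOpcycles]
  exact iff_of_eq congr($(coboundary g) = f.1)

end

/-- Composing cocycles of `Hom(L, Y)` with a chain map `K ⟶ L`. -/
def homCocyclesPrecomp {K L : ChainComplex C ℕ} (φ : K ⟶ L) (Y : C) (n : ℕ) :
    homCocycles k L Y n →ₗ[k] homCocycles k K Y n :=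
  (Linear.leftComp k Y (φ.f n)).restrict fun f hf ↦ by
    change K.d (n + 1) n ≫ φ.f n ≫ f = 0
    rw [← φ.comm_assoc, show L.d (n + 1) n ≫ f = 0 from hf, Limits.comp_zero]

/-- Composing cocycles of `Hom(K, Y)` with a morphism `Y ⟶ Z`. -/
def homCocyclesPostcomp (K : ChainComplex C ℕ) {Y Z : C} (u : Y ⟶ Z) (n : ℕ) :
    homCocycles k K Y n →ₗ[k] homCocycles k K Z n :=
  (Linear.rightComp k (K.X n) u).restrict fun f hf ↦ by
    change K.d (n + 1) n ≫ f ≫ u = 0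
    rw [← Category.assoc, show K.d (n + 1) n ≫ f = 0 from hf, Limits.zero_comp]

lemma cocyclesToHomology_naturality {K L : ChainComplex C ℕ} {Y Z : C} {n : ℕ}
    (ψ : opHomComplex k L Z ⟶ opHomComplex k K Y)
    (f : homCocycles k K Y n) (g : homCocycles k L Z n) (hψ : (ψ.f n).unop f.1 = g.1) :
    (HomologicalComplex.homologyMap ψ n).unop (cocyclesToHomology k K Y n f) =
      cocyclesToHomology k L Z n g := by
  have opcycles : (HomologicalComplex.opcyclesMap ψ n).unop (cocyclesToOpcycles k K Y n f) =
      cocyclesToOpcycles k L Z n g := unop_pOpcycles_injective k L Z n <| by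
    rw [unop_pOpcycles_cocyclesToOpcycles, ← hψ, ← unop_pOpcycles_cocyclesToOpcycles k K Y n f]
    exact congr($(HomologicalComplex.p_opcyclesMap ψ n).unop (cocyclesToOpcycles k K Y n f))
  exact congr($(HomologicalComplex.homologyι_naturality ψ n).unop
    (cocyclesToOpcycles k K Y n f)).trans congr(((opHomComplex k L Z).homologyι n).unop $opcycles)

section

variable [EnoughProjectives C] {X : C} (P : ProjectiveResolution X) (Y : C) (n : ℕ)

/-- The class of a cocycle of `Hom(P, Y)` in the derived functor `Ext`. -/
def derivedExtClass :
    homCocycles k P.complex Y n →ₗ[k] ((Ext k C n).obj (op X)).obj Y :=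
  (P.isoLeftDerivedObj ((linearYoneda k C).obj Y).rightOp n).hom.unop.hom ∘ₗ
    (cocyclesToHomology k P.complex Y n).hom

lemma isoLeftDerivedObj_unop_bijective :
    Function.Bijective (P.isoLeftDerivedObj ((linearYoneda k C).obj Y).rightOp n).hom.unop :=
  (ConcreteCategory.isIso_iff_bijective _).1 inferInstance

lemma derivedExtClass_surjective : Function.Surjective (derivedExtClass k P Y n) :=
  (isoLeftDerivedObj_unop_bijective k P Y n).2.comp (cocyclesToHomology_surjective k _ Y n)

lemma derivedExtClass_eq_zero_iff (f : homCocycles k P.complex Y n) :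
    derivedExtClass k P Y n f = 0 ↔ cocyclesToHomology k P.complex Y n f = 0 :=
  map_eq_zero_iff (P.isoLeftDerivedObj ((linearYoneda k C).obj Y).rightOp n).hom.unop.hom
    (isoLeftDerivedObj_unop_bijective k P Y n).1

lemma derivedExt_map_derivedExtClass {X' : C} {P' : ProjectiveResolution X'} {g : X' ⟶ X}
    (φ : ProjectiveResolution.Hom P' P g) (f : homCocycles k P.complex Y n) :
    ((Ext k C n).map g.op).app Y (derivedExtClass k P Y n f) =
      derivedExtClass k P' Y n (homCocyclesPrecomp k φ.hom Y n f) :=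
  congr($(ProjectiveResolution.isoLeftDerivedObj_hom_naturality g P' P φ.hom
      (by simpa using φ.hom_f_zero_comp_π_f_zero) ((linearYoneda k C).obj Y).rightOp n).unop
      (cocyclesToHomology k P.complex Y n f)).trans
    congr((P'.isoLeftDerivedObj ((linearYoneda k C).obj Y).rightOp n).hom.unop
      $(cocyclesToHomology_naturality k _ f (homCocyclesPrecomp k φ.hom Y n f) rfl))

lemma derivedExt_map_app_derivedExtClass {Y Z : C} (u : Y ⟶ Z) (f : homCocycles k P.complex Y n) :
    ((Ext k C n).obj (op X)).map u (derivedExtClass k P Y n f) =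
      derivedExtClass k P Z n (homCocyclesPostcomp k P.complex u n f) := by
  have eq := ProjectiveResolution.leftDerived_app_eq
    (NatTrans.rightOp ((linearYoneda k C).map u)) P n
  rw [← Category.assoc, Iso.eq_comp_inv] at eq
  exact congr($(eq).unop (cocyclesToHomology k P.complex Y n f)).trans
    congr((P.isoLeftDerivedObj ((linearYoneda k C).obj Z).rightOp n).hom.unop
      $(cocyclesToHomology_naturality k _ f (homCocyclesPostcomp k P.complex u n f) rfl))

end

section

variable [HasExt.{w} C] {X : C} (P : ProjectiveResolution X) (Y : C) (n : ℕ)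

lemma smul_extMk (f : homCocycles k P.complex Y n) (a : k) :
    a • P.extMk f.1 (n + 1) rfl (d_comp_homCocycle k _ Y n f) =
      P.extMk (a • f).1 (n + 1) rfl (d_comp_homCocycle k _ Y n (a • f)) := by
  rw [Abelian.Ext.smul_eq_comp_mk₀, P.extMk_comp_mk₀]
  congr 1
  simp

lemma extMk_zero_eq_zero_iff (f : P.complex.X 0 ⟶ Y) (hf : P.complex.d 1 0 ≫ f = 0) :
    P.extMk f 1 rfl hf = 0 ↔ f = 0 := by
  refine ⟨fun h ↦ ?_, fun h ↦ by subst h; exact P.extMk_zero 1 rfl⟩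
  replace h := congrArg P.extEquivCohomologyClass h
  rw [ProjectiveResolution.extEquivCohomologyClass_extMk,
    ProjectiveResolution.extEquivCohomologyClass_zero,
    CochainComplex.HomComplex.CohomologyClass.mk_eq_zero_iff,
    CochainComplex.HomComplex.Cocycle.toSingleMk_mem_coboundaries_iff _ _ _ _ _ 1 (by simp)] at h
  obtain ⟨g, hg⟩ := h
  rw [(CochainComplex.isZero_of_isStrictlyLE P.cochainComplex 0 1).eq_of_src g 0,
    Limits.comp_zero] at hg
  exact (cancel_epi _).1 (hg.symm.trans Limits.comp_zero.symm)

/-- The class of a cocycle of `Hom(P, Y)` in `Ext` defined through the derived category. -/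
def extClass : homCocycles k P.complex Y n →ₗ[k] Abelian.Ext X Y n where
  toFun f := P.extMk f.1 (n + 1) rfl (d_comp_homCocycle k _ Y n f)
  map_add' f g := (P.add_extMk f.1 g.1 (n + 1) rfl f.2 g.2).symm
  map_smul' a f := (smul_extMk k P Y n f a).symm

lemma extClass_surjective : Function.Surjective (extClass k P Y n) := fun e ↦
  let ⟨f, hf, h⟩ := P.extMk_surjective e (n + 1) rfl
  ⟨⟨f, hf⟩, h⟩

lemma extClass_zero_eq_zero_iff (f : homCocycles k P.complex Y 0) :
    extClass k P Y 0 f = 0 ↔ f = 0 :=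
  (extMk_zero_eq_zero_iff P Y f.1 f.2).trans Submodule.coe_eq_zero

lemma extClass_eq_zero_iff (f : homCocycles k P.complex Y n) :
    extClass k P Y n f = 0 ↔ cocyclesToHomology k P.complex Y n f = 0 := by
  cases n with
  | zero => rw [extClass_zero_eq_zero_iff, cocyclesToHomology_zero_eq_zero_iff]
  | succ n =>
    rw [cocyclesToHomology_succ_eq_zero_iff]
    exact P.extMk_eq_zero_iff f.1 (n + 2) rfl f.2 n rfl

variable [EnoughProjectives C]

/-- The derived category `Ext` agrees with the derived functor `Ext`. -/
def extLinearEquivDerivedExt :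
    Abelian.Ext X Y n ≃ₗ[k] ((Ext k C n).obj (op X)).obj Y :=
  ((extClass k P Y n).quotKerEquivOfSurjective (extClass_surjective k P Y n)).symm ≪≫ₗ
    Submodule.quotEquivOfEq _ _ (by
      ext f
      rw [LinearMap.mem_ker, LinearMap.mem_ker, extClass_eq_zero_iff,
        derivedExtClass_eq_zero_iff]) ≪≫ₗ
    (derivedExtClass k P Y n).quotKerEquivOfSurjective (derivedExtClass_surjective k P Y n)

lemma extLinearEquivDerivedExt_extClass (f : homCocycles k P.complex Y n) :
    extLinearEquivDerivedExt k P Y n (extClass k P Y n f) = derivedExtClass k P Y n f := by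
  have mk_eq : ((extClass k P Y n).quotKerEquivOfSurjective (extClass_surjective k P Y n)).symm
      (extClass k P Y n f) = Submodule.Quotient.mk f :=
    (LinearEquiv.symm_apply_eq _).2 rfl
  rw [extLinearEquivDerivedExt, LinearEquiv.trans_apply, LinearEquiv.trans_apply, mk_eq]
  rfl

lemma extLinearEquivDerivedExt_mk₀_comp {X' : C} (P' : ProjectiveResolution X') (g : X' ⟶ X)
    (e : Abelian.Ext X Y n) :
    extLinearEquivDerivedExt k P' Y n ((Abelian.Ext.mk₀ g).comp e (zero_add n)) =
      ((Ext k C n).map g.op).app Y (extLinearEquivDerivedExt k P Y n e) := by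
  obtain ⟨f, rfl⟩ := extClass_surjective k P Y n e
  let φ : ProjectiveResolution.Hom P' P g :=
    ⟨ProjectiveResolution.lift g P' P, by
      simpa using ProjectiveResolution.lift_commutes_zero g P' P⟩
  rw [extLinearEquivDerivedExt_extClass, derivedExt_map_derivedExtClass k P Y n φ,
    ← extLinearEquivDerivedExt_extClass]
  exact congr(extLinearEquivDerivedExt k P' Y n $(P.mk₀_comp_extMk f.1 (n + 1) rfl f.2 φ))

lemma extLinearEquivDerivedExt_comp_mk₀ {Y Z : C} (u : Y ⟶ Z) (e : Abelian.Ext X Y n) :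
    extLinearEquivDerivedExt k P Z n (e.comp (Abelian.Ext.mk₀ u) (add_zero n)) =
      ((Ext k C n).obj (op X)).map u (extLinearEquivDerivedExt k P Y n e) := by
  obtain ⟨f, rfl⟩ := extClass_surjective k P Y n e
  rw [extLinearEquivDerivedExt_extClass, derivedExt_map_app_derivedExtClass,
    ← extLinearEquivDerivedExt_extClass]
  exact congr(extLinearEquivDerivedExt k P Z n $(P.extMk_comp_mk₀ f.1 (n + 1) rfl f.2 u))

end

end ExtComparison

/-! ### Local cohomology as a colimit of `Ext` modules -/

namespace locH

open Opposite Abelian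

section Colimit

variable (I : Ideal R)

/-- The projection `R ⧸ I ^ t' ⟶ R ⧸ I ^ t`, the transition map of the system whose `Ext` modules
have local cohomology as their colimit. -/
def powQuotMap {t t' : ℕ} (h : t ≤ t') :
    ModuleCat.of R (R ⧸ I ^ t') ⟶ ModuleCat.of R (R ⧸ I ^ t) :=
  ModuleCat.ofHom (Submodule.factor (Ideal.pow_le_pow_right h))

variable (n : ℕ) (M : ModuleCat.{0} R)

/-- Local cohomology of `M` as a cocone over the derived functors `Ext` of the `R ⧸ I ^ t`. -/
def extCocone : Limits.Cocone
    (localCohomology.diagram (localCohomology.idealPowersDiagram I) n ⋙ (evaluation _ _).obj M) :=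
  ((evaluation _ _).obj M).mapCocone (Limits.colimit.cocone _)

/-- `extCocone` is a colimit, since evaluation at `M` preserves colimits. -/
def isColimitExtCocone : Limits.IsColimit (extCocone I n M) :=
  Limits.isColimitOfPreserves ((evaluation _ _).obj M) (Limits.colimit.isColimit _)

/-- The structure map `Ext^n(R ⧸ I ^ t, M) → H^n_I(M)`. -/
def ofExt (t : ℕ) :
    Abelian.Ext (ModuleCat.of R (R ⧸ I ^ t)) M n →ₗ[R] (localCohomology I n).obj M :=
  ((extCocone I n M).ι.app (op (op t))).hom ∘ₗ
    (extLinearEquivDerivedExt R (projectiveResolution _) M n).toLinearMap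

variable {n M}

lemma exists_ofExt_eq (z : (localCohomology I n).obj M) : ∃ t e, ofExt I n M t e = z := by
  obtain ⟨t, y, rfl⟩ := Limits.Concrete.isColimit_exists_rep _ (isColimitExtCocone I n M) z
  obtain ⟨e, rfl⟩ := (extLinearEquivDerivedExt R (projectiveResolution _) M n).surjective y
  exact ⟨t.unop.unop, e, rfl⟩

lemma ofExt_mk₀_powQuotMap_comp {t t' : ℕ} (h : t ≤ t')
    (e : Abelian.Ext (ModuleCat.of R (R ⧸ I ^ t)) M n) :
    ofExt I n M t' ((Ext.mk₀ (powQuotMap I h)).comp e (zero_add n)) = ofExt I n M t e :=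
  (congrArg ((extCocone I n M).ι.app (op (op t'))).hom
    (extLinearEquivDerivedExt_mk₀_comp R _ M n _ (powQuotMap I h) e)).trans
    congr($((extCocone I n M).w (homOfLE h).op.op)
      (extLinearEquivDerivedExt R (projectiveResolution _) M n e))

lemma map_ofExt {N : ModuleCat.{0} R} (u : M ⟶ N) (t : ℕ)
    (e : Abelian.Ext (ModuleCat.of R (R ⧸ I ^ t)) M n) :
    (localCohomology I n).map u (ofExt I n M t e) =
      ofExt I n N t (e.comp (Ext.mk₀ u) (add_zero n)) :=
  congr($((Limits.colimit.ι (localCohomology.diagram (localCohomology.idealPowersDiagram I) n)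
      (op (op t))).naturality u)
    (extLinearEquivDerivedExt R (projectiveResolution _) M n e)).symm.trans
    (congrArg ((extCocone I n N).ι.app (op (op t))).hom
      (extLinearEquivDerivedExt_comp_mk₀ R _ n u e)).symm

lemma ofExt_eq_zero_iff {t : ℕ} (e : Abelian.Ext (ModuleCat.of R (R ⧸ I ^ t)) M n) :
    ofExt I n M t e = 0 ↔
      ∃ (t' : ℕ) (h : t ≤ t'), (Ext.mk₀ (powQuotMap I h)).comp e (zero_add n) = 0 := by
  refine ⟨fun he ↦ ?_, fun ⟨t', h, he⟩ ↦ by rw [← ofExt_mk₀_powQuotMap_comp I h, he, map_zero]⟩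
  obtain ⟨t', f, g, hfg⟩ := (Limits.Concrete.isColimit_rep_eq_iff_exists _
    (isColimitExtCocone I n M) (i := op (op t)) (j := op (op t))
    (extLinearEquivDerivedExt R (projectiveResolution _) M n e) 0).1 (he.trans (map_zero _).symm)
  have h : t ≤ t'.unop.unop := leOfHom f.unop.unop
  refine ⟨t'.unop.unop, h, ?_⟩
  rw [← map_eq_zero_iff (extLinearEquivDerivedExt R (projectiveResolution _) M n)
    (LinearEquiv.injective _), extLinearEquivDerivedExt_mk₀_comp]
  exact hfg.trans (map_zero _)

section Desc

variable {N : ModuleCat.{0} R} (φ : ∀ t, Abelian.Ext (ModuleCat.of R (R ⧸ I ^ t)) M n →ₗ[R] N)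
  (hφ : ∀ ⦃t t'⦄ (h : t ≤ t') e, φ t' ((Ext.mk₀ (powQuotMap I h)).comp e (zero_add n)) = φ t e)

/-- The cocone over the derived functors `Ext` of the `R ⧸ I ^ t` given by a compatible family of
linear maps out of `Ext^n(R ⧸ I ^ t, M)`. -/
def descCocone : Limits.Cocone
    (localCohomology.diagram (localCohomology.idealPowersDiagram I) n ⋙
      (evaluation _ _).obj M) where
  pt := N
  ι :=
    { app t := ModuleCat.ofHom (φ t.unop.unop ∘ₗ
        (extLinearEquivDerivedExt R (projectiveResolution _) M n).symm.toLinearMap)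
      naturality t t' f := by
        let equiv (t : ℕ) := extLinearEquivDerivedExt R
          (projectiveResolution (ModuleCat.of R (R ⧸ I ^ t))) M n
        ext y
        obtain ⟨e, rfl⟩ := (equiv t.unop.unop).surjective y
        have map_eq := extLinearEquivDerivedExt_mk₀_comp R (projectiveResolution _) M n
          (projectiveResolution _) (powQuotMap I (leOfHom f.unop.unop)) e
        refine (congrArg (fun y ↦ φ _ ((equiv t'.unop.unop).symm y)) map_eq.symm).trans ?_
        exact (congrArg (φ _) ((equiv t'.unop.unop).symm_apply_apply _)).trans <|
          (hφ (leOfHom f.unop.unop) e).trans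
            (congrArg (φ _) ((equiv t.unop.unop).symm_apply_apply e).symm) }

/-- The linear map out of local cohomology given by a compatible family of linear maps out of
`Ext^n(R ⧸ I ^ t, M)`. -/
def desc : (localCohomology I n).obj M →ₗ[R] N :=
  ((isColimitExtCocone I n M).desc (descCocone I φ hφ)).hom

lemma desc_ofExt (t : ℕ) (e : Abelian.Ext (ModuleCat.of R (R ⧸ I ^ t)) M n) :
    desc I φ hφ (ofExt I n M t e) = φ t e :=
  congr($((isColimitExtCocone I n M).fac (descCocone I φ hφ) (op (op t)))
      (extLinearEquivDerivedExt R (projectiveResolution _) M n e)).trans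
    (congrArg (φ t) ((extLinearEquivDerivedExt R _ M n).symm_apply_apply e))

end Desc

end Colimit

end locH

/-! ### Power torsion -/

section PowTorsion

variable {A : Type*} [CommRing A] (I : Ideal A)

/-- The `I`-power torsion submodule `Γ_I(N)` of a module `N`. The equation `powTorsion I N = ⊤`
expresses that `N` is an `I`-power torsion module. -/
def powTorsion (N : Type*) [AddCommGroup N] [Module A N] : Submodule A N where
  carrier := {m | ∃ t, ∀ a ∈ I ^ t, a • m = 0}
  zero_mem' := ⟨0, fun a _ ↦ smul_zero a⟩
  add_mem' := by
    rintro m m' ⟨t, ht⟩ ⟨t', ht'⟩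
    refine ⟨max t t', fun a ha ↦ ?_⟩
    rw [smul_add, ht a (Ideal.pow_le_pow_right (le_max_left _ _) ha),
      ht' a (Ideal.pow_le_pow_right (le_max_right _ _) ha), add_zero]
  smul_mem' := by
    rintro r m ⟨t, ht⟩
    exact ⟨t, fun a ha ↦ by rw [smul_comm, ht a ha, smul_zero]⟩

variable {I} {N P : Type*} [AddCommGroup N] [Module A N] [AddCommGroup P] [Module A P]

lemma mem_powTorsion {m : N} : m ∈ powTorsion I N ↔ ∃ t, ∀ a ∈ I ^ t, a • m = 0 := Iff.rfl

lemma map_mem_powTorsion (f : N →ₗ[A] P) {m : N} (hm : m ∈ powTorsion I N) :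
    f m ∈ powTorsion I P := by
  obtain ⟨t, ht⟩ := hm
  exact ⟨t, fun a ha ↦ by rw [← map_smul, ht a ha, map_zero]⟩

lemma powTorsion_eq_top_of_injective {f : N →ₗ[A] P} (hf : Function.Injective f)
    (hP : powTorsion I P = ⊤) : powTorsion I N = ⊤ := by
  refine Submodule.eq_top_iff'.2 fun m ↦ ?_
  obtain ⟨t, ht⟩ : f m ∈ powTorsion I P := hP ▸ Submodule.mem_top
  exact ⟨t, fun a ha ↦ hf (by rw [map_smul, ht a ha, map_zero])⟩

lemma powTorsion_eq_top_of_surjective {f : N →ₗ[A] P} (hf : Function.Surjective f)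
    (hN : powTorsion I N = ⊤) : powTorsion I P = ⊤ := by
  refine Submodule.eq_top_iff'.2 fun p ↦ ?_
  obtain ⟨m, rfl⟩ := hf p
  exact map_mem_powTorsion f (hN ▸ Submodule.mem_top)

lemma powTorsion_powTorsion : powTorsion I (powTorsion I N) = ⊤ :=
  Submodule.eq_top_iff'.2 fun ⟨_, t, ht⟩ ↦ ⟨t, fun a ha ↦ Subtype.ext (ht a ha)⟩

lemma powTorsion_eq_top_of_pow_le_annihilator {t : ℕ} (ht : I ^ t ≤ Module.annihilator A N) :
    powTorsion I N = ⊤ :=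
  Submodule.eq_top_iff'.2 fun m ↦ ⟨t, fun _ ha ↦ Module.mem_annihilator.1 (ht ha) m⟩

lemma powTorsion_eq_top_of_le_radical_annihilator (hI : I.FG)
    (h : I ≤ (Module.annihilator A N).radical) : powTorsion I N = ⊤ :=
  let ⟨_, ht⟩ := Ideal.exists_pow_le_of_le_radical_of_fg h hI
  powTorsion_eq_top_of_pow_le_annihilator ht

lemma exists_pow_le_annihilator [Module.Finite A N] (hN : powTorsion I N = ⊤) :
    ∃ t, I ^ t ≤ Module.annihilator A N := by
  obtain ⟨S, hS⟩ := Module.Finite.fg_top (R := A) (M := N)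
  choose t ht using fun m : N ↦ mem_powTorsion.1 (hN ▸ Submodule.mem_top : m ∈ powTorsion I N)
  refine ⟨S.sup t, fun a ha ↦ ?_⟩
  rw [← Submodule.annihilator_top, ← hS, Submodule.mem_annihilator_span]
  exact fun m ↦ ht m a (Ideal.pow_le_pow_right (Finset.le_sup m.2) ha)

lemma powTorsion_quotient_powTorsion [IsNoetherian A N] :
    powTorsion I (N ⧸ powTorsion I N) = ⊥ := by
  obtain ⟨s, hs⟩ := exists_pow_le_annihilator (I := I) (N := powTorsion I N) powTorsion_powTorsion
  refine eq_bot_iff.2 ?_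
  rintro q ⟨t, ht⟩
  obtain ⟨m, rfl⟩ := (powTorsion I N).mkQ_surjective q
  refine (Submodule.Quotient.mk_eq_zero _).2 ⟨s + t, ?_⟩
  suffices I ^ s * I ^ t ≤ LinearMap.ker (LinearMap.toSpanSingleton A N m) by rwa [pow_add]
  refine Ideal.mul_le.2 fun a ha b hb ↦ ?_
  have hbm : b • m ∈ powTorsion I N := (Submodule.Quotient.mk_eq_zero _).1 (ht b hb)
  simpa [mul_smul] using congrArg Subtype.val (Module.mem_annihilator.1 (hs ha) ⟨b • m, hbm⟩)

lemma subsingleton_of_isSMulRegular {y : A} (hy : y ∈ I) (hreg : IsSMulRegular N y)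
    (hN : powTorsion I N = ⊤) : Subsingleton N := by
  refine subsingleton_of_forall_eq 0 fun m ↦ ?_
  obtain ⟨t, ht⟩ : m ∈ powTorsion I N := hN ▸ Submodule.mem_top
  exact (hreg.pow t).right_eq_zero_of_smul (ht _ (Ideal.pow_mem_pow hy t))

/-- This is the Artin–Rees lemma, read as the continuity of `g` for the `I`-adic topology. -/
lemma exists_comap_pow_smul_top_le_ker [IsNoetherianRing A] [Module.Finite A P]
    {K : Submodule A P} (g : K →ₗ[A] N) (hN : powTorsion I N = ⊤) :
    ∃ k, (I ^ k • ⊤ : Submodule A P).comap K.subtype ≤ LinearMap.ker g := by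
  obtain ⟨t, ht⟩ := exists_pow_le_annihilator
    (powTorsion_eq_top_of_injective (LinearMap.range g).injective_subtype hN)
  have smul_top_le : I ^ t • ⊤ ≤ LinearMap.ker g := Submodule.smul_le.2 fun a ha r _ ↦ by
    simpa using congrArg Subtype.val (Module.mem_annihilator.1 (ht ha) (g.rangeRestrict r))
  obtain ⟨k, hk⟩ := Ideal.exists_pow_inf_eq_pow_smul I K
  refine ⟨t + k, fun r hr ↦ ?_⟩
  have mem : (r : P) ∈ I ^ (t + k) • ⊤ ⊓ K := ⟨hr, r.2⟩
  rw [hk (t + k) (Nat.le_add_left _ _), Nat.add_sub_cancel] at mem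
  have le_map : I ^ t • K ≤ (LinearMap.ker g).map K.subtype := by
    simpa only [Submodule.map_smul'', K.map_subtype_top] using
      Submodule.map_mono (f := K.subtype) smul_top_le
  obtain ⟨r', hr', heq⟩ := le_map (Submodule.smul_mono le_rfl inf_le_right mem)
  exact Subtype.ext heq ▸ hr'

lemma exists_extension_of_comap_le_ker (hN : Module.Baer A N) {K L : Submodule A P}
    (g : K →ₗ[A] N) (hg : L.comap K.subtype ≤ LinearMap.ker g) :
    ∃ h : P →ₗ[A] N, L ≤ LinearMap.ker h ∧ h ∘ₗ K.subtype = g := by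
  have injective : Function.Injective ((L.comap K.subtype).mapQ L K.subtype le_rfl) := by
    rw [← LinearMap.ker_eq_bot, Submodule.ker_mapQ, Submodule.mkQ_map_self]
  obtain ⟨h, hh⟩ := hN.extension_property _ injective ((L.comap K.subtype).liftQ g hg)
  refine ⟨h ∘ₗ L.mkQ, fun p hp ↦ ?_, LinearMap.ext fun r ↦ congr($hh (Submodule.Quotient.mk r))⟩
  rw [LinearMap.mem_ker, LinearMap.comp_apply, Submodule.mkQ_apply,
    (Submodule.Quotient.mk_eq_zero L).2 hp, map_zero]

lemma baer_powTorsion [IsNoetherianRing A] (hN : Module.Baer A N) :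
    Module.Baer A (powTorsion I N) := by
  intro J g
  obtain ⟨k, hk⟩ := exists_comap_pow_smul_top_le_ker g powTorsion_powTorsion
  obtain ⟨h, hpow, hcomp⟩ := exists_extension_of_comap_le_ker hN
    ((powTorsion I N).subtype ∘ₗ g) (hk.trans (LinearMap.ker_le_ker_comp _ _))
  refine ⟨h.codRestrict _ fun r ↦ ⟨k, fun a ha ↦ ?_⟩, fun r hr ↦ Subtype.ext congr($hcomp ⟨r, hr⟩)⟩
  rw [← map_smul]
  exact hpow (Submodule.smul_mem_smul ha Submodule.mem_top)

end PowTorsion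

/-! ### The long exact sequence of local cohomology -/

namespace locH

open Abelian

variable (I : Ideal R)

section Postcomp

variable {L M N : ModuleCat.{0} R} {n m l p q : ℕ}

/-- Yoneda composition with a class `α ∈ Ext^p(M, N)` on local cohomology, a common generalization
of functoriality (`p = 0`) and of the connecting maps (`p = 1`). -/
def postcomp (α : Ext M N p) (h : n + p = m) :
    (localCohomology I n).obj M →ₗ[R] (localCohomology I m).obj N :=
  desc I (fun t ↦ ofExt I m N t ∘ₗ α.postcompOfLinear R _ h) fun _ t' ht e ↦
    (congrArg (ofExt I m N t') (Ext.comp_assoc _ _ _ (zero_add n) h (by lia))).trans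
      (ofExt_mk₀_powQuotMap_comp I ht (e.comp α h))

lemma postcomp_ofExt (α : Ext M N p) (h : n + p = m) (t : ℕ)
    (e : Ext (ModuleCat.of R (R ⧸ I ^ t)) M n) :
    postcomp I α h (ofExt I n M t e) = ofExt I m N t (e.comp α h) :=
  desc_ofExt ..

lemma exact_postcomp {α : Ext L M p} {β : Ext M N q} {h : n + p = m} {h' : m + q = l}
    (hαβ : ∀ t, Function.Exact (α.postcomp (.of R (R ⧸ I ^ t)) h)
      (β.postcomp (.of R (R ⧸ I ^ t)) h')) :
    Function.Exact (postcomp I α h) (postcomp I β h') := by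
  intro z
  refine ⟨fun hz ↦ ?_, ?_⟩
  · obtain ⟨t, e, rfl⟩ := exists_ofExt_eq I z
    rw [postcomp_ofExt, ofExt_eq_zero_iff] at hz
    obtain ⟨t', ht, he⟩ := hz
    rw [← Ext.comp_assoc _ _ _ (zero_add m) h' (by lia)] at he
    obtain ⟨e', he'⟩ := (hαβ t' _).1 he
    exact ⟨ofExt I n L t' e', (postcomp_ofExt I α h t' e').trans <|
      (congrArg (ofExt I m M t') he').trans (ofExt_mk₀_powQuotMap_comp I ht e)⟩
  · rintro ⟨y, rfl⟩
    obtain ⟨t, e, rfl⟩ := exists_ofExt_eq I y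
    rw [postcomp_ofExt, postcomp_ofExt]
    exact (congrArg (ofExt I l N t) ((hαβ t).apply_apply_eq_zero e)).trans (map_zero _)

end Postcomp

section Functoriality

variable (n : ℕ) {A B C : Type} [AddCommGroup A] [Module R A] [AddCommGroup B] [Module R B]
  [AddCommGroup C] [Module R C]

/-- The map `H^n_I(f)` induced by a linear map `f`. -/
def map (f : A →ₗ[R] B) : locH I n A →ₗ[R] locH I n B :=
  ((localCohomology I n).map (ModuleCat.ofHom f)).hom

lemma map_eq_postcomp (f : A →ₗ[R] B) :
    map I n f = postcomp I (Ext.mk₀ (ModuleCat.ofHom f)) (add_zero n) := by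
  refine LinearMap.ext fun z ↦ ?_
  obtain ⟨t, e, rfl⟩ := exists_ofExt_eq I z
  exact (map_ofExt I _ t e).trans (postcomp_ofExt I _ _ t e).symm

lemma map_comp (g : B →ₗ[R] C) (f : A →ₗ[R] B) : map I n (g ∘ₗ f) = map I n g ∘ₗ map I n f :=
  congrArg ModuleCat.Hom.hom
    ((localCohomology I n).map_comp (ModuleCat.ofHom f) (ModuleCat.ofHom g))

lemma map_lsmul (r : R) : map I n (LinearMap.lsmul R A r) = LinearMap.lsmul R (locH I n A) r := by
  refine LinearMap.ext fun z ↦ ?_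
  obtain ⟨t, e, rfl⟩ := exists_ofExt_eq I z
  rw [map_eq_postcomp, postcomp_ofExt, LinearMap.lsmul_apply, ← map_smul, Ext.smul_eq_comp_mk₀]
  rfl

/-- A linear equivalence induces a linear equivalence on local cohomology. -/
def mapEquiv (e : A ≃ₗ[R] B) : locH I n A ≃ₗ[R] locH I n B :=
  ((localCohomology I n).mapIso e.toModuleIso).toLinearEquiv

lemma powTorsion_eq_top : powTorsion I (locH I n A) = ⊤ := by
  refine Submodule.eq_top_iff'.2 fun z ↦ ?_
  obtain ⟨t, e, rfl⟩ := exists_ofExt_eq I z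
  refine ⟨t, fun a ha ↦ ?_⟩
  have smul_id : a • 𝟙 (ModuleCat.of R (R ⧸ I ^ t)) = 0 := by
    ext
    exact Ideal.Quotient.eq_zero_iff_mem.2 (by simpa using ha)
  rw [← map_smul, ← Ext.mk₀_id_comp e, ← Ext.smul_comp, ← Ext.mk₀_smul, smul_id, Ext.mk₀_zero,
    Ext.zero_comp, map_zero]

lemma subsingleton_of_injective [Module.Injective R A] : Subsingleton (locH I (n + 1) A) := by
  have : Injective (ModuleCat.of R A) := (Module.injective_iff_injective_object R A).1 ‹_›
  refine subsingleton_of_forall_eq 0 fun z ↦ ?_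
  obtain ⟨t, e, rfl⟩ := exists_ofExt_eq I z
  rw [Ext.eq_zero_of_injective e, map_zero]

section LongExactSequence

variable {f : A →ₗ[R] B} {g : B →ₗ[R] C} (hf : Function.Injective f) (hfg : Function.Exact f g)
  (hg : Function.Surjective g)
include hf hfg hg

lemma exact_map : Function.Exact (map I n f) (map I n g) := by
  rw [map_eq_postcomp, map_eq_postcomp]
  exact exact_postcomp I fun t ↦ (ShortComplex.ab_exact_iff_function_exact _).1 <|
    Ext.covariant_sequence_exact₂' _ (ModuleCat.shortComplex_shortExact
      (ModuleCat.shortComplexOfCompEqZero f g hfg.linearMap_comp_eq_zero) hfg hf hg) n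

lemma exists_connecting : ∃ δ : locH I n C →ₗ[R] locH I (n + 1) A,
    Function.Exact (map I n g) δ ∧ Function.Exact δ (map I (n + 1) f) := by
  have shortExact := ModuleCat.shortComplex_shortExact
    (ModuleCat.shortComplexOfCompEqZero f g hfg.linearMap_comp_eq_zero) hfg hf hg
  rw [map_eq_postcomp, map_eq_postcomp]
  exact ⟨postcomp I shortExact.extClass rfl,
    exact_postcomp I fun t ↦ (ShortComplex.ab_exact_iff_function_exact _).1 <|
      Ext.covariant_sequence_exact₃' _ shortExact n (n + 1) rfl,
    exact_postcomp I fun t ↦ (ShortComplex.ab_exact_iff_function_exact _).1 <|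
      Ext.covariant_sequence_exact₁' _ shortExact n (n + 1) rfl⟩

end LongExactSequence

end Functoriality

section DegreeZero

variable {A B : Type} [AddCommGroup A] [Module R A] [AddCommGroup B] [Module R B]

/-- Evaluation at `1` of the homomorphism `R ⧸ J → A` that an element of `Ext^0` stands for. -/
def extEvalOne (J : Ideal R) : Ext (ModuleCat.of R (R ⧸ J)) (ModuleCat.of R A) 0 →ₗ[R] A :=
  LinearMap.applyₗ (1 : R ⧸ J) ∘ₗ (ModuleCat.homLinearEquiv (S := R)).toLinearMap ∘ₗ
    (Ext.linearEquiv₀ (R := R)).toLinearMap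

lemma extEvalOne_mk₀ {J : Ideal R} (u : ModuleCat.of R (R ⧸ J) ⟶ ModuleCat.of R A) :
    extEvalOne J (Ext.mk₀ u) = u 1 :=
  congr($((Ext.linearEquiv₀ (R := R)).apply_symm_apply u) 1)

/-- The canonical map `H^0_I(A) → A`, which identifies `H^0_I(A)` with `Γ_I(A)`. -/
def zeroToModule : locH I 0 A →ₗ[R] A :=
  desc (N := ModuleCat.of R A) I (fun t ↦ extEvalOne (I ^ t)) fun t t' ht e ↦ by
    obtain ⟨u, rfl⟩ := (Ext.mk₀_bijective _ _).2 e
    rw [Ext.mk₀_comp_mk₀, extEvalOne_mk₀, extEvalOne_mk₀]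
    rfl

lemma zeroToModule_ofExt_mk₀ {t : ℕ} (u : ModuleCat.of R (R ⧸ I ^ t) ⟶ ModuleCat.of R A) :
    zeroToModule I (ofExt I 0 _ t (Ext.mk₀ u)) = u 1 :=
  (desc_ofExt ..).trans (extEvalOne_mk₀ u)

lemma exists_ofExt_mk₀_eq (z : locH I 0 A) : ∃ (t : ℕ)
    (u : ModuleCat.of R (R ⧸ I ^ t) ⟶ ModuleCat.of R A), ofExt I 0 _ t (Ext.mk₀ u) = z := by
  obtain ⟨t, e, rfl⟩ := exists_ofExt_eq I z
  obtain ⟨u, rfl⟩ := (Ext.mk₀_bijective _ _).2 e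
  exact ⟨t, u, rfl⟩

lemma zeroToModule_map (f : A →ₗ[R] B) (z : locH I 0 A) :
    zeroToModule I (map I 0 f z) = f (zeroToModule I z) := by
  obtain ⟨t, u, rfl⟩ := exists_ofExt_mk₀_eq I z
  rw [map_eq_postcomp, postcomp_ofExt, Ext.mk₀_comp_mk₀, zeroToModule_ofExt_mk₀,
    zeroToModule_ofExt_mk₀]
  rfl

lemma zeroToModule_injective : Function.Injective (zeroToModule I (A := A)) := by
  refine (injective_iff_map_eq_zero _).2 fun z hz ↦ ?_
  obtain ⟨t, u, rfl⟩ := exists_ofExt_mk₀_eq I z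
  have hu : u = 0 := by
    ext
    exact (zeroToModule_ofExt_mk₀ I u).symm.trans hz
  rw [hu, Ext.mk₀_zero, map_zero]

lemma range_zeroToModule : LinearMap.range (zeroToModule I (A := A)) = powTorsion I A := by
  refine le_antisymm ?_ ?_
  · rintro _ ⟨z, rfl⟩
    exact map_mem_powTorsion _ (powTorsion_eq_top I 0 (A := A) ▸ Submodule.mem_top)
  · rintro m ⟨t, ht⟩
    let u : (R ⧸ I ^ t) →ₗ[R] A := (I ^ t).liftQ (LinearMap.toSpanSingleton R A m) ht
    exact ⟨ofExt I 0 _ t (Ext.mk₀ (ModuleCat.ofHom u)),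
      (zeroToModule_ofExt_mk₀ I _).trans (one_smul R m)⟩

lemma annihilator_zero_le :
    Module.annihilator R (locH I 0 A) ≤ Module.annihilator R (powTorsion I A) :=
  range_zeroToModule I (A := A) ▸
    LinearMap.annihilator_le_of_surjective _ (zeroToModule I).surjective_rangeRestrict

lemma map_zero_surjective {f : A →ₗ[R] B} (hf : Function.Surjective f)
    (hA : powTorsion I A = ⊤) : Function.Surjective (map I 0 f) := by
  intro w
  obtain ⟨a, ha⟩ := hf (zeroToModule I w)
  obtain ⟨z, rfl⟩ : a ∈ LinearMap.range (zeroToModule I) :=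
    (range_zeroToModule I).trans hA ▸ Submodule.mem_top
  exact ⟨z, zeroToModule_injective I ((zeroToModule_map I f z).trans ha)⟩

end DegreeZero

section Vanishing

variable {n : ℕ} {A B C : Type} [AddCommGroup A] [Module R A] [AddCommGroup B] [Module R B]
  [AddCommGroup C] [Module R C] {f : A →ₗ[R] B} {g : B →ₗ[R] C}
  (hf : Function.Injective f) (hfg : Function.Exact f g) (hg : Function.Surjective g)
include hf hfg hg

lemma map_surjective_of_subsingleton_succ [Subsingleton (locH I (n + 1) A)] :
    Function.Surjective (map I n g) := by
  obtain ⟨δ, hgδ, -⟩ := exists_connecting I n hf hfg hg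
  exact fun z ↦ (hgδ z).1 (Subsingleton.elim _ _)

lemma map_surjective_of_subsingleton [Subsingleton (locH I n C)] :
    Function.Surjective (map I n f) :=
  fun z ↦ (exact_map I n hf hfg hg z).1 (Subsingleton.elim _ _)

lemma map_injective_of_subsingleton [Subsingleton (locH I n A)] :
    Function.Injective (map I n g) := by
  refine (injective_iff_map_eq_zero _).2 fun z hz ↦ ?_
  obtain ⟨w, rfl⟩ := (exact_map I n hf hfg hg z).1 hz
  rw [Subsingleton.elim w 0, map_zero]

lemma map_succ_injective_of_surjective (hsurj : Function.Surjective (map I n g)) :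
    Function.Injective (map I (n + 1) f) := by
  obtain ⟨δ, hgδ, hδf⟩ := exists_connecting I n hf hfg hg
  refine (injective_iff_map_eq_zero _).2 fun z hz ↦ ?_
  obtain ⟨w, rfl⟩ := (hδf z).1 hz
  exact (hgδ w).2 (hsurj w)

lemma finite_of_exact [IsNoetherianRing R] [Module.Finite R (locH I n B)]
    [Module.Finite R (locH I (n + 1) A)] : Module.Finite R (locH I n C) := by
  obtain ⟨δ, hgδ, -⟩ := exists_connecting I n hf hfg hg
  have := isNoetherian_of_range_eq_ker (map I n g) δ hgδ.linearMap_ker_eq.symm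
  infer_instance

lemma annihilator_mul_annihilator_succ_le :
    Module.annihilator R (locH I n B) * Module.annihilator R (locH I (n + 1) A) ≤
      Module.annihilator R (locH I n C) := by
  obtain ⟨δ, hgδ, -⟩ := exists_connecting I n hf hfg hg
  refine Ideal.mul_le.2 fun a ha b hb ↦ Module.mem_annihilator.2 fun z ↦ ?_
  obtain ⟨w, hw⟩ : ∃ w, map I n g w = b • z :=
    (hgδ _).1 (by rw [map_smul, Module.mem_annihilator.1 hb])
  rw [mul_smul, ← hw, ← map_smul, Module.mem_annihilator.1 ha, map_zero]

end Vanishing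

lemma exists_injective_powTorsion_embedding [IsNoetherianRing R] {A : Type} [AddCommGroup A]
    [Module R A] (hA : powTorsion I A = ⊤) : ∃ (E : ModuleCat.{0} R) (f : A →ₗ[R] E),
      Module.Injective R E ∧ powTorsion I E = ⊤ ∧ Function.Injective f := by
  let E := Injective.under (ModuleCat.of R A)
  let ι : A →ₗ[R] E := (Injective.ι (ModuleCat.of R A)).hom
  have injective_ι : Function.Injective ι := (ModuleCat.mono_iff_injective _).1 inferInstance
  have : Module.Injective R E := (Module.injective_iff_injective_object R E).2
    (inferInstanceAs (Injective (Injective.under _)))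
  exact ⟨ModuleCat.of R (powTorsion I E),
    ι.codRestrict _ fun _ ↦ map_mem_powTorsion ι (hA ▸ Submodule.mem_top),
    (baer_powTorsion (Module.Baer.of_injective this)).injective, powTorsion_powTorsion,
    fun _ _ h ↦ injective_ι congr($(h).1)⟩

lemma subsingleton_of_powTorsion_eq_top [IsNoetherianRing R] (n : ℕ) {A : Type} [AddCommGroup A]
    [Module R A] (hA : powTorsion I A = ⊤) : Subsingleton (locH I (n + 1) A) := by
  obtain ⟨E, f, hE, hEtop, hf⟩ := exists_injective_powTorsion_embedding I hA
  have := subsingleton_of_injective I n (A := E)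
  suffices Function.Surjective (map I n (LinearMap.range f).mkQ) from
    (map_succ_injective_of_surjective I hf (LinearMap.exact_map_mkQ_range f)
      (Submodule.mkQ_surjective _) this).subsingleton
  cases n with
  | zero => exact map_zero_surjective I (Submodule.mkQ_surjective _) hEtop
  | succ n =>
    have := subsingleton_of_powTorsion_eq_top n
      (powTorsion_eq_top_of_surjective (LinearMap.range f).mkQ_surjective hEtop)
    exact Function.surjective_to_subsingleton _

end locH

/-! ### Parameters -/

section CosetAvoidance

variable {A : Type*} [CommRing A]

lemma exists_forall_add_notMem_of_isPrime (z : A) (J : Ideal A) (S : Finset (Ideal A))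
    (hS : ∀ p ∈ S, p.IsPrime) (h : ∀ p ∈ S, ¬ Ideal.span {z} ⊔ J ≤ p) :
    ∃ b ∈ J, ∀ p ∈ S, z + b ∉ p := by
  classical
  induction S using Finset.strongInduction with
  | H S ih =>
    rcases S.eq_empty_or_nonempty with rfl | hne
    · exact ⟨0, J.zero_mem, by simp⟩
    obtain ⟨p, hp⟩ := S.exists_minimal hne
    have forall_of_erase {c : A} (hcp : c ∉ p) (hc : ∀ q ∈ S.erase p, c ∉ q) : ∀ q ∈ S, c ∉ q :=
      fun q hq ↦ if hqp : q = p then hqp ▸ hcp else hc q (Finset.mem_erase.2 ⟨hqp, hq⟩)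
    obtain ⟨b, hb, hbS⟩ := ih (S.erase p) (Finset.erase_ssubset hp.1)
      (fun q hq ↦ hS q (Finset.mem_of_mem_erase hq)) (fun q hq ↦ h q (Finset.mem_of_mem_erase hq))
    by_cases hzb : z + b ∈ p
    swap
    · exact ⟨b, hb, forall_of_erase hzb hbS⟩
    have hJ : ¬ J ≤ p := fun hJ ↦ h p hp.1 <|
      sup_le ((p.span_singleton_le_iff_mem).2 ((Ideal.add_mem_iff_left p (hJ hb)).1 hzb)) hJ
    have not_inf_le : ¬ J ⊓ (S.erase p).inf id ≤ p := fun hle ↦ by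
      rcases (hS p hp.1).inf_le.1 hle with hle | hle
      · exact hJ hle
      · obtain ⟨q, hq, hqp⟩ := (hS p hp.1).inf_le'.1 hle
        exact Finset.ne_of_mem_erase hq
          (hqp.antisymm (hp.2 (Finset.mem_of_mem_erase hq) hqp))
    obtain ⟨c, ⟨hcJ, hcS⟩, hcp⟩ := SetLike.not_le_iff_exists.1 not_inf_le
    refine ⟨b + c, J.add_mem hb hcJ, forall_of_erase ?_ fun q hq ↦ ?_⟩ <;> rw [← add_assoc]
    · rwa [Ideal.add_mem_iff_right p hzb]
    · rw [Ideal.add_mem_iff_left q ((Finset.inf_le hq : (S.erase p).inf id ≤ q) hcS)]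
      exact hbS q hq

variable [IsNoetherianRing A] {N : Type*} [AddCommGroup N] [Module A N]

lemma exists_isSMulRegular_add [Module.Finite A N] {z : A} {J : Ideal A}
    (h : ∀ p ∈ associatedPrimes A N, ¬ Ideal.span {z} ⊔ J ≤ p) :
    ∃ b ∈ J, IsSMulRegular N (z + b) := by
  have finite := associatedPrimes.finite A N
  obtain ⟨b, hb, hbp⟩ := exists_forall_add_notMem_of_isPrime z J finite.toFinset
    (fun p hp ↦ IsAssociatedPrime.isPrime (finite.mem_toFinset.1 hp))
    (fun p hp ↦ h p (finite.mem_toFinset.1 hp))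
  refine ⟨b, hb, ?_⟩
  rw [← Set.mem_ofPred_eq (p := IsSMulRegular N), ← Set.notMem_compl_iff,
    ← biUnion_associatedPrimes_eq_compl_regular]
  simpa using hbp

lemma not_le_of_mem_associatedPrimes {I p : Ideal A} (hN : powTorsion I N = ⊥)
    (hp : p ∈ associatedPrimes A N) : ¬ I ≤ p := by
  intro hIp
  obtain ⟨hprime, m, rfl⟩ := isAssociatedPrime_iff.1 hp
  have hm : m ∈ powTorsion I N :=
    ⟨1, fun a ha ↦ by simpa using hIp (by rwa [pow_one] at ha)⟩
  rw [hN, Submodule.mem_bot] at hm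
  exact hprime.ne_top (by simp [hm])

end CosetAvoidance

section ParameterList

open scoped Pointwise

variable {A : Type*} [CommRing A]

/-- `L` is a list of elements of `I` with `I ⊆ Rad(⟨L⟩ + Ann N)`. When `cd(I, N)` is the length of
`L`, this says that `L` is an `I`-relative system of parameters of `N`; without a condition on the
length the notion passes to submodules and quotients of `N`. -/
structure IsParameterList (I : Ideal A) (L : List A) (N : Type*) [AddCommGroup N] [Module A N] :
    Prop where
  mem : ∀ a ∈ L, a ∈ I
  le_radical : I ≤ (Ideal.ofList L ⊔ Module.annihilator A N).radical

namespace IsParameterList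

variable {I : Ideal A} {L L' : List A} {y z b : A} {N P : Type*} [AddCommGroup N] [Module A N]
  [AddCommGroup P] [Module A P]

lemma ofList_le (h : IsParameterList I L N) : Ideal.ofList L ≤ I := Ideal.span_le.2 h.mem

lemma powTorsion_eq_top (h : IsParameterList I [] N) (hI : I.FG) : powTorsion I N = ⊤ :=
  powTorsion_eq_top_of_le_radical_annihilator hI (by simpa using h.le_radical)

lemma of_annihilator_le (h : IsParameterList I L N)
    (hP : Module.annihilator A N ≤ Module.annihilator A P) : IsParameterList I L P :=
  ⟨h.mem, h.le_radical.trans (Ideal.radical_mono (sup_le_sup_left hP _))⟩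

lemma perm (h : IsParameterList I L N) (hL : L.Perm L') : IsParameterList I L' N where
  mem a ha := h.mem a (hL.mem_iff.2 ha)
  le_radical := by
    simpa only [Ideal.ofList, hL.mem_iff] using h.le_radical

lemma add_cons (h : IsParameterList I (z :: L) N) (hb : b ∈ Ideal.ofList L) :
    IsParameterList I ((z + b) :: L) N where
  mem := List.forall_mem_cons.2 ⟨I.add_mem (h.mem z List.mem_cons_self)
    (h.ofList_le (Ideal.ofList_cons z L ▸ Ideal.mem_sup_right hb)),
    (List.forall_mem_cons.1 h.mem).2⟩
  le_radical := by
    refine h.le_radical.trans (Ideal.radical_mono (sup_le_sup_right ?_ _))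
    rw [Ideal.ofList_cons, Ideal.ofList_cons]
    refine sup_le ((Ideal.span_singleton_le_iff_mem _).2 ?_) le_sup_right
    exact (Ideal.add_mem_iff_left _ (Ideal.mem_sup_right hb)).1
      (Ideal.mem_sup_left (Ideal.mem_span_singleton_self _))

lemma tail (h : IsParameterList I (y :: L) N) (hy : y ∈ (Module.annihilator A N).radical) :
    IsParameterList I L N where
  mem := (List.forall_mem_cons.1 h.mem).2
  le_radical := by
    refine h.le_radical.trans (Ideal.radical_le_radical_iff.2 ?_)
    rw [Ideal.ofList_cons]
    refine sup_le (sup_le ((Ideal.span_singleton_le_iff_mem _).2 ?_) ?_) ?_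
    · exact Ideal.radical_mono le_sup_right hy
    · exact le_sup_left.trans Ideal.le_radical
    · exact le_sup_right.trans Ideal.le_radical

lemma torsionBy (h : IsParameterList I (y :: L) N) :
    IsParameterList I L (Submodule.torsionBy A N y) :=
  (h.of_annihilator_le (LinearMap.annihilator_le_of_injective _
    (Submodule.injective_subtype _))).tail <| Ideal.le_radical <| Module.mem_annihilator.2
      fun m ↦ Subtype.ext ((Submodule.mem_torsionBy_iff y m.1).1 m.2)

lemma torsionBy_le_powTorsion (h : IsParameterList I [y] N) (hI : I.FG) :
    Submodule.torsionBy A N y ≤ powTorsion I N := fun m hm ↦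
  map_mem_powTorsion (Submodule.subtype _) (m := ⟨m, hm⟩)
    (h.torsionBy.powTorsion_eq_top hI ▸ Submodule.mem_top)

lemma quotSMulTop_pow (h : IsParameterList I (y :: L) N) (n : ℕ) :
    IsParameterList I L (QuotSMulTop (y ^ n) N) :=
  (h.of_annihilator_le (LinearMap.annihilator_le_of_surjective _
    (Submodule.mkQ_surjective _))).tail ⟨n, QuotSMulTop.mem_annihilator N _⟩

lemma quotSMulTop (h : IsParameterList I (y :: L) N) : IsParameterList I L (QuotSMulTop y N) :=
  pow_one y ▸ h.quotSMulTop_pow 1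

lemma exists_isSMulRegular_add [IsNoetherianRing A] [Module.Finite A N]
    (h : IsParameterList I (z :: L) N) (hN : powTorsion I N = ⊥) :
    ∃ b ∈ Ideal.ofList L, IsSMulRegular N (z + b) := by
  refine _root_.exists_isSMulRegular_add fun p hp hle ↦ not_le_of_mem_associatedPrimes hN hp ?_
  have ass : IsAssociatedPrime p N := hp
  rw [← ass.isPrime.isRadical.radical]
  refine h.le_radical.trans (Ideal.radical_mono (sup_le (Ideal.ofList_cons z L ▸ hle) ?_))
  exact Submodule.annihilator_top (R := A) (M := N) ▸ ass.annihilator_le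

end IsParameterList

end ParameterList

namespace locH

open scoped Pointwise

variable (I : Ideal R) (n : ℕ) (y : R) (N : Type) [AddCommGroup N] [Module R N]

lemma map_subtype_map_rangeRestrict (z : locH I n N) :
    map I n (LinearMap.range (LinearMap.lsmul R N y)).subtype
      (map I n (LinearMap.lsmul R N y).rangeRestrict z) = y • z := by
  rw [← LinearMap.comp_apply, ← map_comp, LinearMap.subtype_comp_codRestrict, map_lsmul]
  rfl

lemma map_rangeRestrict_surjective [Subsingleton (locH I (n + 1) (Submodule.torsionBy R N y))] :
    Function.Surjective (map I n (LinearMap.lsmul R N y).rangeRestrict) :=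
  map_surjective_of_subsingleton_succ I (Submodule.injective_subtype (Submodule.torsionBy R N y))
    (fun _ ↦ by simp [Subtype.ext_iff]) (LinearMap.surjective_rangeRestrict _)

lemma map_rangeRestrict_injective [Subsingleton (locH I n (Submodule.torsionBy R N y))] :
    Function.Injective (map I n (LinearMap.lsmul R N y).rangeRestrict) :=
  map_injective_of_subsingleton I (Submodule.injective_subtype (Submodule.torsionBy R N y))
    (fun _ ↦ by simp [Subtype.ext_iff]) (LinearMap.surjective_rangeRestrict _)

lemma exact_range_subtype_mkQ : Function.Exact
    (LinearMap.range (LinearMap.lsmul R N y)).subtype (y • ⊤ : Submodule R N).mkQ := by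
  rw [LinearMap.exact_iff, Submodule.ker_mkQ, Submodule.range_subtype]
  exact (LinearMap.range_eq_map _).symm

lemma isSMulRegular_succ [Subsingleton (locH I (n + 1) (Submodule.torsionBy R N y))]
    [Subsingleton (locH I n (QuotSMulTop y N))] : IsSMulRegular (locH I (n + 1) N) y := by
  have injective := (map_succ_injective_of_surjective I (n := n) (Submodule.injective_subtype _)
    (exact_range_subtype_mkQ y N) (Submodule.mkQ_surjective _)
    (Function.surjective_to_subsingleton _)).comp (map_rangeRestrict_injective I (n + 1) y N)
  exact fun a b hab ↦ injective (by
    simpa only [Function.comp_apply, map_subtype_map_rangeRestrict] using hab)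

lemma lsmul_surjective [Subsingleton (locH I (n + 1) (Submodule.torsionBy R N y))]
    [Subsingleton (locH I n (QuotSMulTop y N))] :
    Function.Surjective (LinearMap.lsmul R (locH I n N) y) := by
  have surjective := (map_surjective_of_subsingleton I (n := n) (Submodule.injective_subtype _)
    (exact_range_subtype_mkQ y N) (Submodule.mkQ_surjective _)).comp
    (map_rangeRestrict_surjective I n y N)
  intro z
  obtain ⟨w, rfl⟩ := surjective z
  exact ⟨w, (map_subtype_map_rangeRestrict I n y N w).symm⟩

lemma finite_quotSMulTop [IsNoetherianRing R] [Module.Finite R (locH I n N)]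
    [Module.Finite R (locH I (n + 1) N)]
    [Subsingleton (locH I (n + 1 + 1) (Submodule.torsionBy R N y))] :
    Module.Finite R (locH I n (QuotSMulTop y N)) :=
  have := Module.Finite.of_surjective _ (map_rangeRestrict_surjective I (n + 1) y N)
  finite_of_exact I (Submodule.injective_subtype _) (exact_range_subtype_mkQ y N)
    (Submodule.mkQ_surjective _)

lemma annihilator_le_annihilator_quotient_powTorsion [IsNoetherianRing R] :
    Module.annihilator R (locH I n N) ≤
      Module.annihilator R (locH I n (N ⧸ powTorsion I N)) :=
  have := subsingleton_of_powTorsion_eq_top I n (powTorsion_powTorsion (I := I) (N := N))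
  LinearMap.annihilator_le_of_surjective _ (map_surjective_of_subsingleton_succ I
    (Submodule.injective_subtype _) (LinearMap.exact_subtype_mkQ _) (Submodule.mkQ_surjective _))

variable {y N} in
lemma annihilator_mul_annihilator_succ_le_quotSMulTop (hy : IsSMulRegular N y) :
    Module.annihilator R (locH I n N) * Module.annihilator R (locH I (n + 1) N) ≤
      Module.annihilator R (locH I n (QuotSMulTop y N)) :=
  annihilator_mul_annihilator_succ_le I (f := LinearMap.lsmul R N y) hy
    (LinearMap.exact_lsmul_mkQ_smul_top N y) (Submodule.mkQ_surjective _)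

end locH

lemma IsParameterList.subsingleton_locH [IsNoetherianRing R] {I : Ideal R} {L : List R} {N : Type}
    [AddCommGroup N] [Module R N] (h : IsParameterList I L N) {j : ℕ} (hj : L.length < j) :
    Subsingleton (locH I j N) := by
  induction L generalizing N j with
  | nil =>
    obtain ⟨n, rfl⟩ := Nat.exists_eq_add_of_lt hj
    exact locH.subsingleton_of_powTorsion_eq_top I _
      (h.powTorsion_eq_top (IsNoetherian.noetherian I))
  | cons y L ih =>
    obtain ⟨n, rfl⟩ := Nat.exists_eq_add_of_lt hj
    have := ih h.torsionBy (j := (y :: L).length + n + 1) (by grind)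
    have := ih h.quotSMulTop (j := (y :: L).length + n) (by grind)
    exact subsingleton_of_isSMulRegular (h.mem y List.mem_cons_self)
      (locH.isSMulRegular_succ I _ y N) (locH.powTorsion_eq_top I _)

section TorsionBy

open scoped Pointwise

variable {A : Type*} [CommRing A] {x : A} {N : Type*} [AddCommGroup N] [Module A N]

lemma smul_mem_of_mem_annihilator_torsionBy_quotient {K : Submodule A N} {a : A}
    (ha : a ∈ (Submodule.torsionBy A (N ⧸ K) x).annihilator) {m : N}
    (hm : m ∈ Submodule.torsionBy A N x) : a • m ∈ K := by
  refine (Submodule.Quotient.mk_eq_zero K).1 (Submodule.mem_annihilator.1 ha (K.mkQ m) ?_)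
  rw [Submodule.mem_torsionBy_iff, ← map_smul, (Submodule.mem_torsionBy_iff x m).1 hm, map_zero]

lemma annihilator_mul_annihilator_torsionBy_quotient_le (K : Submodule A N) :
    K.annihilator * (Submodule.torsionBy A (N ⧸ K) x).annihilator ≤
      (Submodule.torsionBy A N x).annihilator :=
  Ideal.mul_le.2 fun a ha b hb ↦ Submodule.mem_annihilator.2 fun m hm ↦ mul_smul a b m ▸
    Submodule.mem_annihilator.1 ha _ (smul_mem_of_mem_annihilator_torsionBy_quotient hb hm)

-- By Krull's intersection theorem, `⋂ₙ yⁿN = 0`.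
lemma le_annihilator_torsionBy_of_quotSMulTop_pow [IsNoetherianRing A] [Module.Finite A N] {y : A}
    (hy : y ∈ (⊥ : Ideal A).jacobson) {J : Ideal A}
    (hJ : ∀ n : ℕ, J ≤ (Submodule.torsionBy A (QuotSMulTop (y ^ n) N) x).annihilator) :
    J ≤ (Submodule.torsionBy A N x).annihilator := by
  refine fun a ha ↦ Submodule.mem_annihilator.2 fun m hm ↦ ?_
  have smul_mem (n : ℕ) : a • m ∈ (⊥ : Ideal A).jacobson ^ n • (⊤ : Submodule A N) := by
    obtain ⟨q, -, hq⟩ := smul_mem_of_mem_annihilator_torsionBy_quotient (hJ n ha) hm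
    rw [← hq]
    exact Submodule.smul_mem_smul (Ideal.pow_mem_pow hy n) Submodule.mem_top
  have mem_iInf := (Submodule.mem_iInf _).2 smul_mem
  rwa [Ideal.iInf_pow_smul_eq_bot_of_le_jacobson _ le_rfl] at mem_iInf

end TorsionBy

lemma IsParameterList.pow_le_annihilator_torsionBy [IsNoetherianRing R] {I : Ideal R}
    (hjac : I ≤ (⊥ : Ideal R).jacobson) {x : R} {L : List R} {N : Type} [AddCommGroup N]
    [Module R N] [Module.Finite R N] (h : IsParameterList I (x :: L) N) {J : Ideal R}
    (hJ : ∀ j ≤ L.length, J ≤ Module.annihilator R (locH I j N)) :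
    J ^ (2 ^ (L.length + 1) - 1) ≤ (Submodule.torsionBy R N x).annihilator := by
  induction L generalizing N J with
  | nil =>
    simpa using ((hJ 0 le_rfl).trans (locH.annihilator_zero_le I)).trans
      (Submodule.annihilator_mono (h.torsionBy_le_powTorsion (IsNoetherian.noetherian I)))
  | cons z L ih =>
    let Q := N ⧸ powTorsion I N
    have hQ : IsParameterList I (z :: x :: L) Q :=
      (h.of_annihilator_le (LinearMap.annihilator_le_of_surjective _
        (Submodule.mkQ_surjective _))).perm (.swap ..)
    obtain ⟨b, hb, hreg⟩ := hQ.exists_isSMulRegular_add powTorsion_quotient_powTorsion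
    have hy := hQ.add_cons hb
    have le_annihilator_Q (j : ℕ) (hj : j ≤ L.length + 1) :
        J ≤ Module.annihilator R (locH I j Q) :=
      (hJ j hj).trans (locH.annihilator_le_annihilator_quotient_powTorsion I j N)
    have le_annihilator_quotSMulTop (n j : ℕ) (hj : j ≤ L.length) :
        J * J ≤ Module.annihilator R (locH I j (QuotSMulTop ((z + b) ^ n) Q)) :=
      (Ideal.mul_mono (le_annihilator_Q j (by lia)) (le_annihilator_Q (j + 1) (by lia))).trans
        (locH.annihilator_mul_annihilator_succ_le_quotSMulTop I j (hreg.pow n))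
    have le_annihilator_torsionBy : (J * J) ^ (2 ^ (L.length + 1) - 1) ≤
        (Submodule.torsionBy R Q x).annihilator :=
      le_annihilator_torsionBy_of_quotSMulTop_pow (hjac (hy.mem _ List.mem_cons_self))
        fun n ↦ ih (hy.quotSMulTop_pow n) (le_annihilator_quotSMulTop n)
    calc J ^ (2 ^ (L.length + 1 + 1) - 1) = J * (J * J) ^ (2 ^ (L.length + 1) - 1) := by
          rw [← pow_two, ← pow_mul, ← pow_succ']
          congr 1
          have := Nat.one_le_two_pow (n := L.length + 1)
          lia
      _ ≤ (powTorsion I N).annihilator * (Submodule.torsionBy R Q x).annihilator :=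
        Ideal.mul_mono ((hJ 0 (Nat.zero_le _)).trans (locH.annihilator_zero_le I))
          le_annihilator_torsionBy
      _ ≤ (Submodule.torsionBy R N x).annihilator :=
        annihilator_mul_annihilator_torsionBy_quotient_le _

/-! ### Generalized Cohen-Macaulay modules -/

/-- `L` is an `I`-relative system of parameters of the `I`-relative generalized Cohen-Macaulay
module `N`, whose cohomological dimension is the length of `L`. Since
`IsParameterList.subsingleton_locH` gives the vanishing above that degree, and
`IsRelGCMSystem.not_finite_locH` the failure of finiteness in it, only the remaining conditions are
recorded. -/
structure IsRelGCMSystem (I : Ideal R) (L : List R) (N : Type) [AddCommGroup N] [Module R N] :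
    Prop extends IsParameterList I L N where
  finite_locH : ∀ j < L.length, Module.Finite R (locH I j N)
  nontrivial_locH : Nontrivial (locH I L.length N)

lemma IsCd.unique {I : Ideal R} {N : Type} [AddCommGroup N] [Module R N] {c d : ℕ}
    (hc : IsCd I N c) (hd : IsCd I N d) : c = d :=
  le_antisymm (not_lt.1 fun h ↦ not_nontrivial_iff_subsingleton.2 (hd.2 c h) hc.1)
    (not_lt.1 fun h ↦ not_nontrivial_iff_subsingleton.2 (hc.2 d h) hd.1)

lemma IsRelGCM.finite_locH {I : Ideal R} {N : Type} [AddCommGroup N] [Module R N] {c j : ℕ}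
    (h : IsRelGCM I N) (hc : IsCd I N c) (hj : j < c) : Module.Finite R (locH I j N) := by
  rcases h with vanishing | ⟨d, hd, finite, -⟩
  · exact absurd hc.1 (not_nontrivial_iff_subsingleton.2 (vanishing c (by lia)))
  · exact finite j (hd.unique hc ▸ hj)

lemma ofList_take_ofFn {A : Type*} [CommRing A] {c : ℕ} (x : Fin c → A) (i : ℕ) :
    Ideal.ofList ((List.ofFn x).take i) = Ideal.span (x '' {j : Fin c | (j : ℕ) < i}) := by
  refine congrArg Ideal.span (Set.ext fun a ↦ ?_)
  simp only [Set.mem_ofPred_eq, Set.mem_image, List.mem_take_iff_getElem, List.getElem_ofFn,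
    List.length_ofFn, lt_min_iff]
  exact ⟨fun ⟨j, hj, h⟩ ↦ ⟨⟨j, hj.2⟩, hj.1, h⟩, fun ⟨j, hj, h⟩ ↦ ⟨j, ⟨hj, j.2⟩, h⟩⟩

namespace IsRelGCMSystem

open scoped Pointwise

variable {I : Ideal R} {y : R} {L : List R} {N P : Type} [AddCommGroup N] [Module R N]
  [AddCommGroup P] [Module R P]

lemma of_isRsop {c : ℕ} {x : Fin c → R} (hgcm : IsRelGCM I N) (hc : IsCd I N c)
    (hx : IsRsop I N x) : IsRelGCMSystem I (List.ofFn x) N where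
  mem := by simpa [List.mem_ofFn] using hx.1
  le_radical := by
    have ofList_eq : Ideal.ofList (List.ofFn x) = Ideal.span (Set.range x) := by
      simp [Ideal.ofList, List.mem_ofFn, Set.range]
    rw [ofList_eq, ← Submodule.add_eq_sup, hx.2]
    exact le_sup_left.trans Ideal.le_radical
  finite_locH j hj := hgcm.finite_locH hc (by simpa using hj)
  nontrivial_locH := by simpa using hc.1

lemma of_linearEquiv (h : IsRelGCMSystem I L N) (e : N ≃ₗ[R] P) : IsRelGCMSystem I L P where
  toIsParameterList := h.of_annihilator_le e.annihilator_eq.le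
  finite_locH j hj :=
    have := h.finite_locH j hj
    Module.Finite.equiv (locH.mapEquiv I j e)
  nontrivial_locH :=
    have := h.nontrivial_locH
    (locH.mapEquiv I L.length e).symm.toEquiv.nontrivial

lemma exists_le_annihilator_locH (h : IsRelGCMSystem I (y :: L) N) : ∃ J : Ideal R,
    I ≤ J.radical ∧ ∀ j ≤ L.length, J ≤ Module.annihilator R (locH I j N) := by
  refine ⟨(Finset.range (L.length + 1)).inf fun j ↦ Module.annihilator R (locH I j N),
    Finset.inf_induction (p := fun J : Ideal R ↦ I ≤ J.radical)
      (by rw [Ideal.radical_top]; exact le_top)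
      (fun J hJ J' hJ' ↦ Ideal.radical_inf J J' ▸ le_inf hJ hJ') fun j hj ↦ ?_,
    fun j hj ↦ Finset.inf_le (Finset.mem_range.2 (by lia))⟩
  have := h.finite_locH j (Finset.mem_range.1 hj)
  obtain ⟨t, ht⟩ := exists_pow_le_annihilator (locH.powTorsion_eq_top I j (A := N))
  exact fun a ha ↦ ⟨t, ht (Ideal.pow_mem_pow ha t)⟩

variable [IsNoetherianRing R]

lemma isCd (h : IsRelGCMSystem I L N) : IsCd I N L.length :=
  ⟨h.nontrivial_locH, fun _ ↦ h.subsingleton_locH⟩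

variable (hjac : I ≤ (⊥ : Ideal R).jacobson)
include hjac

-- `y` acts surjectively on `H^{|L|+1}_I(N)`, so Nakayama's lemma applies.
lemma not_finite_locH (h : IsRelGCMSystem I (y :: L) N) :
    ¬ Module.Finite R (locH I (L.length + 1) N) := by
  intro finite
  have := h.torsionBy.subsingleton_locH (j := L.length + 1 + 1) (by lia)
  have := h.toIsParameterList.quotSMulTop.subsingleton_locH (Nat.lt_succ_self _)
  have top_le : (⊤ : Submodule R (locH I (L.length + 1) N)) ≤ I • ⊤ := fun z _ ↦ by
    obtain ⟨w, rfl⟩ := locH.lsmul_surjective I (L.length + 1) y N z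
    exact Submodule.smul_mem_smul (h.mem y List.mem_cons_self) Submodule.mem_top
  have top_eq_bot := Submodule.eq_bot_of_le_smul_of_le_jacobson_bot I ⊤ finite.fg_top top_le hjac
  exact not_nontrivial_iff_subsingleton.2
    ((Submodule.subsingleton_iff R).1 (subsingleton_of_bot_eq_top top_eq_bot.symm))
    h.nontrivial_locH

lemma isRelGCM (h : IsRelGCMSystem I L N) : IsRelGCM I N := by
  cases L with
  | nil => exact Or.inl h.isCd.2
  | cons y L => exact Or.inr ⟨_, h.isCd, h.finite_locH, h.not_finite_locH hjac⟩

variable [Module.Finite R N]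

lemma powTorsion_torsionBy (h : IsRelGCMSystem I (y :: L) N) :
    powTorsion I (Submodule.torsionBy R N y) = ⊤ := by
  obtain ⟨J, hIJ, hJ⟩ := h.exists_le_annihilator_locH
  exact powTorsion_eq_top_of_le_radical_annihilator (IsNoetherian.noetherian I)
    (hIJ.trans (Ideal.radical_le_radical_iff.2 fun _ ha ↦
      ⟨_, h.pow_le_annihilator_torsionBy hjac hJ (Ideal.pow_mem_pow ha _)⟩))

lemma quotSMulTop (h : IsRelGCMSystem I (y :: L) N) : IsRelGCMSystem I L (QuotSMulTop y N) := by
  have vanishing (j : ℕ) : Subsingleton (locH I (j + 1) (Submodule.torsionBy R N y)) :=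
    locH.subsingleton_of_powTorsion_eq_top I j (h.powTorsion_torsionBy hjac)
  refine ⟨h.toIsParameterList.quotSMulTop, fun j hj ↦ ?_, ?_⟩
  · have := h.finite_locH j (by grind)
    have := h.finite_locH (j + 1) (by grind)
    exact locH.finite_quotSMulTop I j y N
  · by_contra trivial
    have := not_nontrivial_iff_subsingleton.1 trivial
    exact not_nontrivial_iff_subsingleton.2 (subsingleton_of_isSMulRegular
      (h.mem y List.mem_cons_self) (locH.isSMulRegular_succ I L.length y N)
      (locH.powTorsion_eq_top I _)) h.nontrivial_locH

lemma quotient_take (h : IsRelGCMSystem I L N) {i : ℕ} (hi : i ≤ L.length) :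
    IsRelGCMSystem I (L.drop i) (N ⧸ (Ideal.ofList (L.take i) • ⊤ : Submodule R N)) := by
  induction i generalizing L N with
  | zero => exact h.of_linearEquiv (Submodule.quotEquivOfEqBot _ (by simp)).symm
  | succ i ih =>
    cases L with
    | nil => simp at hi
    | cons y L =>
      exact (ih (h.quotSMulTop hjac) (by simpa using hi)).of_linearEquiv
        (Submodule.quotOfListConsSMulTopEquivQuotSMulTopInner N y (L.take i)).symm

end IsRelGCMSystem

/-- **Theorem 3.3(ii).** Suppose `I` is contained in the Jacobson radical of `R` and `M` is an
`I`-relative generalized Cohen-Macaulay module with `c := cd(I,M) = ara(I,M)`. If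
`x₁, …, x_c` is an `I`-relative system of parameters of `M`, then for every `i = 0, …, c`
the quotient `M/⟨x₁,…,x_i⟩M` is an `I`-relative generalized Cohen-Macaulay module and
`cd(I, M/⟨x₁,…,x_i⟩M) = c - i`. -/
theorem theorem_3_3_ii [IsNoetherianRing R] (I : Ideal R) (hjac : I ≤ (⊥ : Ideal R).jacobson)
    (M : Type) [AddCommGroup M] [Module R M] [Module.Finite R M]
    (hgcm : IsRelGCM I M) (c : ℕ) (hc : IsCd I M c) (ha : IsAra I M c)
    (x : Fin c → R) (hx : IsRsop I M x) :
    ∀ i : ℕ, i ≤ c →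
      IsRelGCM I (M ⧸ (Ideal.span (x '' {j : Fin c | (j : ℕ) < i}) • (⊤ : Submodule R M))) ∧
      IsCd I (M ⧸ (Ideal.span (x '' {j : Fin c | (j : ℕ) < i}) • (⊤ : Submodule R M)))
        (c - i) := by
  intro i hi
  have system := (IsRelGCMSystem.of_isRsop hgcm hc hx).quotient_take hjac (i := i) (by simpa)
  rw [ofList_take_ofFn] at system
  exact ⟨system.isRelGCM hjac, by simpa using system.isCd⟩
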